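/- Let R be a nonzero prime left artinian ring. Then there exist a division ring D and a positive integer n such that R is isomorphic as a ring to the ring M_n(D) of n×n matrices over D. -/

import Mathlib

universe u

/-- If `R` is a nonzero prime left artinian ring, then there exist a division ring `D` and a
positive integer `n` such that `R ≅ Mₙ(D)`.  Here primeness is expressed elementwise:
`aRb = {0}` implies `a = 0` or `b = 0`. -/
theorem wedderburn_artin_prime (R : Type u) [Ring R] [Nontrivial R]
    (hprime : ∀ a b : R, (∀ x : R, a * x * b = 0) → a = 0 ∨ b = 0)
    (hart : IsArtinianRing R) :
    ∃ (n : ℕ) (D : Type u) (_ : DivisionRing D),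
      0 < n ∧ Nonempty (R ≃+* Matrix (Fin n) (Fin n) D) := by
  have key : ∀ I J : Ideal R, (∀ a ∈ I, ∀ b ∈ J, a * b = 0) → I = ⊥ ∨ J = ⊥ := by
    intro I J h
    by_contra! hc
    obtain ⟨a, ha, ha0⟩ := Submodule.exists_mem_ne_zero_of_ne_bot hc.1
    obtain ⟨b, hb, hb0⟩ := Submodule.exists_mem_ne_zero_of_ne_bot hc.2
    rcases hprime a b (fun x => by
      rw [mul_assoc]; exact h a ha _ (J.mul_mem_left x hb)) with h | h
    · exact ha0 h
    · exact hb0 h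
  have hnil : ∀ (J : Ideal R) (n : ℕ), J ^ n = ⊥ → J = ⊥ := by
    intro J n
    induction n with
    | zero =>
      intro h
      rw [Submodule.pow_zero, Ideal.one_eq_top] at h
      exact absurd h top_ne_bot
    | succ k ih =>
      intro h
      rcases key (J ^ k) J (fun a ha b hb => by
        have hm : a * b ∈ J ^ k * J := Ideal.mul_mem_mul ha hb
        rw [← Submodule.pow_succ, h] at hm
        simpa using hm) with h' | h'
      · exact ih h'
      · exact h'
  have hjac : Ring.jacobson R = ⊥ := by
    obtain ⟨n, hn⟩ := IsArtinianRing.isNilpotent_jacobson_bot (R := R)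
    rw [← Ideal.jacobson_bot]
    exact hnil _ n hn
  have hss : IsSemisimpleRing R := IsArtinianRing.isSemisimpleRing_iff_jacobson.mpr hjac
  have hsimple : IsSimpleRing R := by
    rw [isSimpleRing_iff_isTwoSided_imp]
    refine ⟨inferInstance, fun I hI => ?_⟩
    obtain ⟨J, hJ⟩ := exists_isCompl I
    rcases key I J (fun a ha b hb => by
      have hm : a * b ∈ I ⊓ J := ⟨I.mul_mem_right b ha, J.mul_mem_left a hb⟩
      rw [hJ.inf_eq_bot] at hm
      simpa using hm) with h | h
    · exact Or.inl h
    · right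
      have := hJ.sup_eq_top
      rwa [h, sup_bot_eq] at this
  obtain ⟨n, hn, D, hD, he⟩ := IsSimpleRing.exists_ringEquiv_matrix_divisionRing R
  exact ⟨n, D, hD, Nat.pos_of_ne_zero hn.out, he⟩
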